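/- Let p be a prime, S a commutative ring of characteristic p, and R = S[T, T₁₁, T₁₂, T₂₂] the polynomial ring in four variables. For ij ∈ {11, 12, 22} let D_ij : R → R be the S-linear operator D_ij(f) = (T_ij + 1)·∂f/∂T_ij. Define Θ₂(f) = 2T^{p+1}·D₁₁(f) − (T + T^p)·D₁₂(f) + 2·D₂₂(f), Θ₃(f) = T^{2p}·D₁₁(f) − T^p·D₁₂(f) + D₂₂(f), and for N ∈ ℤ, θ₄⁽ᴺ⁾(f) = (T − T^p)·∂f/∂T + N·f. Then for every N ∈ ℤ, Θ₂ ∘ θ₄⁽ᴺ⁾ − θ₄⁽ᴺ⁻ᵖ⁻¹⁾ ∘ Θ₂ = 2·Θ₃ as S-linear endomorphisms of R. -/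

import Mathlib

open MvPolynomial

/-- The operator `D_ij : f ↦ (T_ij + 1)·∂f/∂T_ij` on `S[T, T₁₁, T₁₂, T₂₂]`,
with the variables indexed by `Fin 4` as `0 ↦ T`, `1 ↦ T₁₁`, `2 ↦ T₁₂`, `3 ↦ T₂₂`. -/
noncomputable def Dij {S : Type*} [CommRing S] (i : Fin 4) (f : MvPolynomial (Fin 4) S) :
    MvPolynomial (Fin 4) S :=
  (X i + 1) * pderiv i f

/-- `Θ₁ f = T²·D₁₁ f − T·D₁₂ f + D₂₂ f`. -/
noncomputable def Theta1 {S : Type*} [CommRing S] (f : MvPolynomial (Fin 4) S) :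
    MvPolynomial (Fin 4) S :=
  X 0 ^ 2 * Dij 1 f - X 0 * Dij 2 f + Dij 3 f

/-- `Θ₂ f = 2T^{p+1}·D₁₁ f − (T + T^p)·D₁₂ f + 2·D₂₂ f`. -/
noncomputable def Theta2 {S : Type*} [CommRing S] (p : ℕ) (f : MvPolynomial (Fin 4) S) :
    MvPolynomial (Fin 4) S :=
  2 * X 0 ^ (p + 1) * Dij 1 f - (X 0 + X 0 ^ p) * Dij 2 f + 2 * Dij 3 f

/-- `Θ₃ f = T^{2p}·D₁₁ f − T^p·D₁₂ f + D₂₂ f`. -/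
noncomputable def Theta3 {S : Type*} [CommRing S] (p : ℕ) (f : MvPolynomial (Fin 4) S) :
    MvPolynomial (Fin 4) S :=
  X 0 ^ (2 * p) * Dij 1 f - X 0 ^ p * Dij 2 f + Dij 3 f

/-- `θ₄⁽ᴺ⁾ f = (T − T^p)·∂f/∂T + N·f`. -/
noncomputable def theta4 {S : Type*} [CommRing S] (p : ℕ) (N : ℤ) (f : MvPolynomial (Fin 4) S) :
    MvPolynomial (Fin 4) S :=
  (X 0 - X 0 ^ p) * pderiv 0 f + (N : MvPolynomial (Fin 4) S) * f

/-!
The polarization `Θ₂` of the quadratic pencil `u ↦ u² D₁₁ - u D₁₂ + D₂₂` is affine in each of its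
two arguments `T` and `T ^ p`. The derivation `E = (T - T ^ p) ∂/∂T` commutes with the `D_ij`, maps
`T` to `T - T ^ p` and kills `T ^ p`, so `⁅E, Θ₂⁆` is the increment of `Θ₂` when its first argument
moves from `T ^ p` to `T`: it equals `Θ₂ - 2 Θ₃`. The weight shift of `p + 1 = 1` cancels the
term `Θ₂`.
-/

section LieRinehart

variable {A L : Type*} [CommRing A] [LieRing L] [Module A L]

/-- The quadratic pencil `u² D₁₁ - u D₁₂ + D₂₂` of vector fields attached to a binary quadratic form
with coefficients `(D 0, D 1, D 2) = (D₁₁, D₁₂, D₂₂)`. The operators `Θ₁` and `Θ₃` are its values at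
`T` and `T ^ p`. -/
def quadraticPencil (D : Fin 3 → L) (u : A) : L :=
  u ^ 2 • D 0 - u • D 1 + D 2

/-- The polarization of `quadraticPencil`, symmetric and affine in each variable, normalized to be
twice the pencil on the diagonal. The operator `Θ₂` is its value at `(T, T ^ p)`. -/
def polarPencil (D : Fin 3 → L) (u v : A) : L :=
  2 • (u * v) • D 0 - (u + v) • D 1 + 2 • D 2

theorem polarPencil_self (D : Fin 3 → L) (u : A) :
    polarPencil D u u = 2 • quadraticPencil D u := by
  simp only [polarPencil, quadraticPencil]
  module

theorem polarPencil_sub_polarPencil (D : Fin 3 → L) (u w v : A) :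
    polarPencil D u v - polarPencil D w v = (u - w) • (2 • v • D 0 - D 1) := by
  simp only [polarPencil]
  module

variable [LieRingModule L A] [LieRinehartRing A L] {E : L} {D : Fin 3 → L}

theorem lie_smul_of_lie_eq_zero {X : L} (h : ⁅E, X⁆ = 0) (a : A) :
    ⁅E, a • X⁆ = ⁅E, a⁆ • X := by
  rw [LieRinehartRing.leibniz_smul_right, h, smul_zero, zero_add]

theorem lie_smul_smul_eq_zero {X Y : L} (h : ⁅X, Y⁆ = 0) {a b : A} (ha : ⁅Y, a⁆ = 0)
    (hb : ⁅X, b⁆ = 0) : ⁅a • X, b • Y⁆ = 0 := by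
  have h_smul_lie : ⁅a • X, Y⁆ = 0 := by
    rw [← lie_skew, LieRinehartRing.leibniz_smul_right, ← lie_skew, h, ha]
    simp
  rw [LieRinehartRing.leibniz_smul_right, h_smul_lie, LieRinehartRing.lie_smul_eq_mul, hb]
  simp

theorem lie_polarPencil (h : ∀ i, ⁅E, D i⁆ = 0) (u v : A) :
    ⁅E, polarPencil D u v⁆ =
      ⁅E, u⁆ • (2 • v • D 0 - D 1) + ⁅E, v⁆ • (2 • u • D 0 - D 1) := by
  simp only [polarPencil, lie_add, lie_sub, lie_nsmul, lie_smul_of_lie_eq_zero (h _), h,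
    LieRinehartRing.leibniz_mul_right]
  module

theorem lie_polarPencil_of_lie_eq_sub (h : ∀ i, ⁅E, D i⁆ = 0) {u v : A}
    (hu : ⁅E, u⁆ = u - v) (hv : ⁅E, v⁆ = 0) :
    ⁅E, polarPencil D u v⁆ = polarPencil D u v - 2 • quadraticPencil D v := by
  rw [lie_polarPencil h, hu, hv, zero_smul, add_zero, ← polarPencil_self,
    polarPencil_sub_polarPencil]

end LieRinehart

theorem derivation_pow_eq_zero {R A M : Type*} [CommSemiring R] [CommSemiring A]
    [AddCommMonoid M] [Algebra R A] [Module A M] [Module R M] (D : Derivation R A M)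
    {q : ℕ} (hq : (q : A) = 0) (a : A) : D (a ^ q) = 0 := by
  rw [D.leibniz_pow, ← Nat.cast_smul_eq_nsmul A, hq, zero_smul]

theorem derivation_twisted_commutator {R A : Type*} [CommRing R] [CommRing A] [Algebra R A]
    (D E : Derivation R A A) {c : A} (hc : D c = 0) (c' f : A) :
    D (E f + c * f) - (E (D f) + c' * D f) = (c - c') * D f - ⁅E, D⁆ f := by
  simp only [map_add, Derivation.leibniz, hc, smul_eq_mul, Derivation.commutator_apply]
  ring

section MvPolynomial

variable {R σ : Type*} [CommRing R]

theorem lie_pderiv_pderiv (i j : σ) :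
    ⁅pderiv (R := R) i, pderiv (R := R) j⁆ = 0 := by
  classical
  refine MvPolynomial.derivation_ext fun k ↦ ?_
  simp [Derivation.commutator_apply, pderiv_X, Pi.single_apply, apply_ite]

variable (R)

/-- The derivation `(X i + 1) ∂/∂X i`, i.e. `∂/∂ log (1 + X i)`. It is `Dij` as a derivation, in an
arbitrary set of variables. -/
noncomputable def pderivLogOneAdd (i : σ) :
    Derivation R (MvPolynomial σ R) (MvPolynomial σ R) :=
  (X i + 1 : MvPolynomial σ R) • pderiv i

/-- The derivation `(X i - X i ^ q) ∂/∂X i`, the first-order part of `theta4`. -/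
noncomputable def artinSchreierDeriv (q : ℕ) (i : σ) :
    Derivation R (MvPolynomial σ R) (MvPolynomial σ R) :=
  (X i - X i ^ q : MvPolynomial σ R) • pderiv i

variable {R}

theorem lie_artinSchreierDeriv_pderivLogOneAdd (q : ℕ) {i j : σ} (h : i ≠ j) :
    ⁅artinSchreierDeriv R q i, pderivLogOneAdd R j⁆ = 0 := by
  refine lie_smul_smul_eq_zero (lie_pderiv_pderiv i j) ?_ ?_
  · simp [pderiv_X_of_ne h]
  · simp [pderiv_X_of_ne h.symm]

theorem artinSchreierDeriv_X (q : ℕ) (i : σ) :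
    artinSchreierDeriv R q i (X i) = X i - X i ^ q := by
  simp [artinSchreierDeriv]

end MvPolynomial

section Theta

variable {S : Type*} [CommRing S]

variable (S) in
/-- The triple of derivations `(D₁₁, D₁₂, D₂₂)` of `S[T, T₁₁, T₁₂, T₂₂]`. -/
noncomputable def serreTateDeriv (i : Fin 3) :
    Derivation S (MvPolynomial (Fin 4) S) (MvPolynomial (Fin 4) S) :=
  pderivLogOneAdd S i.succ

theorem serreTateDeriv_apply (i : Fin 3) (f : MvPolynomial (Fin 4) S) :
    serreTateDeriv S i f = Dij i.succ f :=
  rfl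

theorem Theta2_eq_polarPencil (q : ℕ) (f : MvPolynomial (Fin 4) S) :
    Theta2 q f =
      polarPencil (serreTateDeriv S) (X 0 : MvPolynomial (Fin 4) S) (X 0 ^ q) f := by
  simp only [Theta2, polarPencil, Derivation.add_apply, Derivation.sub_apply,
    Derivation.smul_apply, serreTateDeriv_apply, Fin.reduceSucc, smul_eq_mul, nsmul_eq_mul,
    Nat.cast_ofNat]
  ring

theorem Theta3_eq_quadraticPencil (q : ℕ) (f : MvPolynomial (Fin 4) S) :
    Theta3 q f =
      quadraticPencil (serreTateDeriv S) (X 0 ^ q : MvPolynomial (Fin 4) S) f := by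
  simp only [Theta3, quadraticPencil, Derivation.add_apply, Derivation.sub_apply,
    Derivation.smul_apply, serreTateDeriv_apply, Fin.reduceSucc, smul_eq_mul]
  ring

theorem theta4_eq_artinSchreierDeriv_add (q : ℕ) (N : ℤ) (f : MvPolynomial (Fin 4) S) :
    theta4 q N f = artinSchreierDeriv S q 0 f + N * f :=
  rfl

theorem lie_artinSchreierDeriv_polarPencil {q : ℕ}
    (hq : (q : MvPolynomial (Fin 4) S) = 0) :
    ⁅artinSchreierDeriv S q (0 : Fin 4),
        polarPencil (serreTateDeriv S) (X 0 : MvPolynomial (Fin 4) S) (X 0 ^ q)⁆ =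
      polarPencil (serreTateDeriv S) (X 0 : MvPolynomial (Fin 4) S) (X 0 ^ q) -
        2 • quadraticPencil (serreTateDeriv S) (X 0 ^ q : MvPolynomial (Fin 4) S) :=
  lie_polarPencil_of_lie_eq_sub
    (fun i ↦ lie_artinSchreierDeriv_pderivLogOneAdd q (Fin.succ_ne_zero i).symm)
    (artinSchreierDeriv_X q 0) (derivation_pow_eq_zero _ hq _)

end Theta

theorem stmt_12_general {S : Type*} [CommRing S] {q : ℕ} (hq : (q : S) = 0)
    (N : ℤ) (f : MvPolynomial (Fin 4) S) :
    Theta2 q (theta4 q N f) - theta4 q (N - ((q : ℤ) + 1)) (Theta2 q f) = 2 * Theta3 q f := by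
  have hq_poly : (q : MvPolynomial (Fin 4) S) = 0 := by rw [← map_natCast C, hq, map_zero]
  have h_shift : (N : MvPolynomial (Fin 4) S) - (N - ((q : ℤ) + 1) : ℤ) = 1 := by
    simp [hq_poly]
  simp only [Theta2_eq_polarPencil, Theta3_eq_quadraticPencil, theta4_eq_artinSchreierDeriv_add]
  rw [derivation_twisted_commutator _ _ (Derivation.map_intCast _ N), h_shift,
    lie_artinSchreierDeriv_polarPencil hq_poly, one_mul, Derivation.sub_apply, sub_sub_cancel,
    Derivation.smul_apply, nsmul_eq_mul, Nat.cast_ofNat]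

/-- Let `p` be a prime and `S` a commutative ring of characteristic `p`.  Then for every
`N : ℤ`, `Θ₂ ∘ θ₄⁽ᴺ⁾ − θ₄⁽ᴺ⁻ᵖ⁻¹⁾ ∘ Θ₂ = 2·Θ₃` on `S[T, T₁₁, T₁₂, T₂₂]`. -/
theorem stmt_12 (p : ℕ) (hp : p.Prime) (S : Type*) [CommRing S] [CharP S p]
    (N : ℤ) (f : MvPolynomial (Fin 4) S) :
    Theta2 p (theta4 p N f) - theta4 p (N - ((p : ℤ) + 1)) (Theta2 p f) = 2 * Theta3 p f :=
  stmt_12_general (CharP.cast_eq_zero S p) N f
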